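/- arXiv:1903.00207 — 5 statements merged into one kernel-verified Lean document; each statement's English description precedes it below -/
import Mathlib

section
/- For every natural number n ≥ 1, the Laguerre-type Vandermonde integral evaluates as ∫_{(0,∞)^n} (∏_{a=1}^{n} e^{−w_a}) · (∏_{1≤a<b≤n} (w_a − w_b)²) dw₁⋯dw_n = ∏_{j=1}^{n} j! · (j−1)!. -/
open MeasureTheory

/-!
Expanding both determinants and applying Fubini gives Andréief's identity
`∫ det (fᵢ(xⱼ)) det (gᵢ(xⱼ)) dμⁿ(x) = n! det (∫ fᵢ gⱼ dμ)`. With `fᵢ(x) = e⁻ˣ xⁱ` and `gⱼ(x) = xʲ`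
it reduces the integral to the Hankel determinant of the moments `∫₀^∞ e⁻ˣ xⁱ⁺ʲ dx = (i + j)!`.
Pulling `i!` out of each row and `j!` out of each column leaves the symmetric Pascal matrix
`((i + j).choose i)`, which by Vandermonde's convolution is `L Lᵀ` for the unitriangular matrix
`L = (i.choose k)`, so it has determinant `1`.
-/

section Determinants

open Finset Matrix
open Equiv.Perm (sign)

variable {ι R : Type*} [Fintype ι] [DecidableEq ι] [CommRing R]

theorem det_mul_det_eq_sum_sum (A B : Matrix ι ι R) :
    A.det * B.det = ∑ τ : Equiv.Perm ι, ∑ σ : Equiv.Perm ι,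
      ((sign τ : ℤ) : R) * ((sign σ : ℤ) : R) * ∏ a, A (σ a) a * B (τ a) a := by
  rw [mul_comm, det_apply', det_apply', sum_mul_sum]
  refine sum_congr rfl fun τ _ => sum_congr rfl fun σ _ => ?_
  rw [prod_mul_distrib]
  ring

theorem sum_sum_sign_mul_sign_mul_prod (M : Matrix ι ι R) :
    ∑ τ : Equiv.Perm ι, ∑ σ : Equiv.Perm ι,
        ((sign τ : ℤ) : R) * ((sign σ : ℤ) : R) * ∏ a, M (σ a) (τ a) =
      (Fintype.card ι).factorial * M.det := by
  have inner_sum (τ : Equiv.Perm ι) : ∑ σ : Equiv.Perm ι,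
      ((sign τ : ℤ) : R) * ((sign σ : ℤ) : R) * ∏ a, M (σ a) (τ a) = M.det := by
    calc
      _ = ((sign τ : ℤ) : R) * (M.submatrix id τ).det := by
        simp only [det_apply', submatrix_apply, id_eq, mul_sum, mul_assoc]
      _ = M.det := by
        rw [det_permute', ← mul_assoc, ← Int.cast_mul, Int.units_coe_mul_self, Int.cast_one,
          one_mul]
  simp_rw [inner_sum]
  rw [sum_const, card_univ, Fintype.card_perm, nsmul_eq_mul]

theorem prod_sub_sq_eq_det_vandermonde_sq {n : ℕ} (v : Fin n → R) :
    ∏ p : Fin n × Fin n with p.1 < p.2, (v p.1 - v p.2) ^ 2 = (vandermonde v).det ^ 2 := by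
  simp_rw [det_vandermonde, ← prod_pow, prod_filter, Fintype.prod_prod_type, ← prod_filter,
    filter_lt_eq_Ioi, sub_sq_comm]

theorem sum_choose_mul_choose (i j : ℕ) :
    ∑ k ∈ range (i + 1), i.choose k * j.choose k = (i + j).choose i := by
  rw [add_comm i j, Nat.add_choose_eq,
    Nat.sum_antidiagonal_eq_sum_range_succ fun k l => j.choose k * i.choose l]
  refine sum_congr rfl fun k hk => ?_
  rw [Nat.choose_symm (mem_range_succ_iff.mp hk), mul_comm]

variable (R) in
/-- The lower triangular Pascal matrix with entries `i.choose k`, truncated to size `n`: the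
unitriangular factor of the symmetric Pascal matrix. -/
def lowerPascal (n : ℕ) : Matrix (Fin n) (Fin n) R :=
  of fun i k : Fin n => ((i : ℕ).choose k : R)

theorem det_lowerPascal (n : ℕ) : (lowerPascal R n).det = 1 := by
  have lower_triangular : (lowerPascal R n).IsLowerTriangular := fun i k hik => by
    simp [lowerPascal, Nat.choose_eq_zero_of_lt (show (i : ℕ) < k from hik)]
  rw [det_of_isLowerTriangular _ lower_triangular]
  simp [lowerPascal]

theorem lowerPascal_mul_transpose (n : ℕ) :
    lowerPascal R n * (lowerPascal R n)ᵀ =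
      of fun i j : Fin n => ((i + j : ℕ).choose i : R) := by
  ext i j
  have choose_sum :
      ∑ k : Fin n, (i : ℕ).choose k * (j : ℕ).choose k = (i + j : ℕ).choose i := by
    rw [← sum_choose_mul_choose,
      Fin.sum_univ_eq_sum_range fun k => (i : ℕ).choose k * (j : ℕ).choose k]
    refine (sum_subset (range_subset_range.mpr i.isLt) fun k _ hk => ?_).symm
    rw [Nat.choose_eq_zero_of_lt (by simpa using hk), zero_mul]
  rw [Matrix.mul_apply, of_apply, ← choose_sum]
  simp only [lowerPascal, transpose_apply, of_apply, Nat.cast_sum, Nat.cast_mul]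

theorem det_choose_add (n : ℕ) :
    (of fun i j : Fin n => ((i + j : ℕ).choose i : R)).det = 1 := by
  rw [← lowerPascal_mul_transpose, det_mul, det_transpose, det_lowerPascal, one_mul]

theorem det_factorial_add (n : ℕ) :
    (of fun i j : Fin n => ((i + j : ℕ).factorial : R)).det =
      ∏ i ∈ range n, (i.factorial : R) ^ 2 := by
  have factorial_add (i j : ℕ) : ((i + j).factorial : R) =
      i.factorial * (j.factorial * (i + j).choose i) := by
    rw [← Nat.add_choose_mul_factorial_mul_factorial, ← Nat.choose_symm_add]
    push_cast
    ring
  simp_rw [factorial_add]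
  have pull_out_rows := det_mul_column (fun i : Fin n => ((i : ℕ).factorial : R))
    (of fun i j : Fin n => ((j : ℕ).factorial * (i + j : ℕ).choose i : R))
  have pull_out_columns := det_mul_row (fun j : Fin n => ((j : ℕ).factorial : R))
    (of fun i j : Fin n => ((i + j : ℕ).choose i : R))
  simp only [of_apply] at pull_out_rows pull_out_columns
  rw [pull_out_rows, pull_out_columns, det_choose_add, mul_one, prod_pow, sq,
    Fin.prod_univ_eq_prod_range fun i => (i.factorial : R)]

end Determinants

section DeterminantalIntegrals

variable {𝕜 : Type*} [RCLike 𝕜]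

/-- **Andréief's identity**, the continuous analogue of the Cauchy–Binet formula. -/
theorem integral_det_mul_det {ι α : Type*} [Fintype ι] [DecidableEq ι] [MeasurableSpace α]
    {μ : Measure α} [SigmaFinite μ] {f g : ι → α → 𝕜}
    (hfg : ∀ i j, Integrable (fun x => f i x * g j x) μ) :
    ∫ x : ι → α, (Matrix.of fun i j => f i (x j)).det * (Matrix.of fun i j => g i (x j)).det
        ∂Measure.pi (fun _ => μ) =
      (Fintype.card ι).factorial * (Matrix.of fun i j => ∫ x, f i x * g j x ∂μ).det := by
  have integrable_term (τ σ : Equiv.Perm ι) : Integrable (fun x : ι → α =>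
      ((τ.sign : ℤ) : 𝕜) * ((σ.sign : ℤ) : 𝕜) * ∏ a, f (σ a) (x a) * g (τ a) (x a))
      (Measure.pi fun _ => μ) :=
    (Integrable.fintype_prod fun a => hfg (σ a) (τ a)).const_mul _
  simp_rw [det_mul_det_eq_sum_sum, Matrix.of_apply]
  rw [integral_finsetSum _ fun τ _ => integrable_finsetSum _ fun σ _ => integrable_term τ σ,
    ← sum_sum_sign_mul_sign_mul_prod]
  refine Finset.sum_congr rfl fun τ _ => ?_
  rw [integral_finsetSum _ fun σ _ => integrable_term τ σ]
  refine Finset.sum_congr rfl fun σ _ => ?_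
  rw [integral_const_mul, integral_fintype_prod_eq_prod fun a x => f (σ a) x * g (τ a) x]
  simp only [Matrix.of_apply]

/-- **Heine's identity** for the Hankel determinant of the moments of the weight `ρ`. -/
theorem integral_prod_mul_det_vandermonde_sq {n : ℕ} {μ : Measure 𝕜} [SigmaFinite μ] {ρ : 𝕜 → 𝕜}
    (hρ : ∀ i j : Fin n, Integrable (fun x => ρ x * x ^ (i + j : ℕ)) μ) :
    ∫ x : Fin n → 𝕜, (∏ a, ρ (x a)) * (Matrix.vandermonde x).det ^ 2 ∂Measure.pi (fun _ => μ) =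
      n.factorial * (Matrix.of fun i j : Fin n => ∫ x, ρ x * x ^ (i + j : ℕ) ∂μ).det := by
  have weighted_det (x : Fin n → 𝕜) : (∏ a, ρ (x a)) * (Matrix.vandermonde x).det ^ 2 =
      (Matrix.of fun i j : Fin n => ρ (x j) * x j ^ (i : ℕ)).det *
        (Matrix.of fun i j : Fin n => x j ^ (i : ℕ)).det := by
    have transpose_vandermonde :
        (Matrix.vandermonde x).transpose = Matrix.of fun i j : Fin n => x j ^ (i : ℕ) := rfl
    rw [← Matrix.det_transpose, transpose_vandermonde, sq, ← mul_assoc, ← Matrix.det_mul_row]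
    simp only [Matrix.of_apply]
  simp_rw [weighted_det]
  simp only [pow_add, ← mul_assoc] at hρ ⊢
  rw [integral_det_mul_det hρ, Fintype.card_fin]

end DeterminantalIntegrals

theorem integrableOn_exp_neg_mul_pow (k : ℕ) :
    IntegrableOn (fun x : ℝ => Real.exp (-x) * x ^ k) (Set.Ioi 0) := by
  simpa using Real.GammaIntegral_convergent (s := k + 1) k.cast_add_one_pos

theorem integral_exp_neg_mul_pow (k : ℕ) :
    ∫ x in Set.Ioi (0 : ℝ), Real.exp (-x) * x ^ k = k.factorial := by
  simpa [Real.Gamma_nat_eq_factorial] using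
    (Real.Gamma_eq_integral (s := k + 1) k.cast_add_one_pos).symm

theorem prod_Icc_factorial_mul_factorial_pred (n : ℕ) :
    ∏ j ∈ Finset.Icc 1 n, j.factorial * (j - 1).factorial =
      n.factorial * ∏ i ∈ Finset.range n, i.factorial ^ 2 := by
  induction n with
  | zero => simp
  | succ n ih =>
    rw [Finset.prod_Icc_succ_top n.succ_pos, ih, Finset.prod_range_succ, Nat.add_sub_cancel]
    ring

/-- The Laguerre-type Vandermonde integral:
`∫_{(0,∞)ⁿ} ∏ₐ e^{-wₐ} ∏_{a<b} (wₐ - w_b)² dw = ∏_{j=1}^n j!·(j-1)!`. -/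
theorem laguerre_vandermonde_integral (n : ℕ) (hn : 1 ≤ n) :
    (∫ w in {w : Fin n → ℝ | ∀ a, 0 < w a},
        (∏ a, Real.exp (-(w a))) *
          ∏ p ∈ Finset.univ.filter (fun p : Fin n × Fin n => p.1 < p.2),
            (w p.1 - w p.2) ^ 2) =
      ∏ j ∈ Finset.Icc 1 n, ((Nat.factorial j : ℝ) * (Nat.factorial (j - 1) : ℝ)) := by
  have orthant_eq_pi : {w : Fin n → ℝ | ∀ a, 0 < w a} = Set.univ.pi fun _ => Set.Ioi 0 := by
    ext w
    simp
  simp_rw [prod_sub_sq_eq_det_vandermonde_sq]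
  rw [orthant_eq_pi, volume_pi, Measure.restrict_pi_pi,
    integral_prod_mul_det_vandermonde_sq (ρ := fun x => Real.exp (-x))
      fun i j => integrableOn_exp_neg_mul_pow (i + j)]
  simp_rw [integral_exp_neg_mul_pow]
  rw [det_factorial_add]
  exact_mod_cast (prod_Icc_factorial_mul_factorial_pred n).symm
end

section
/- Let ζ ∈ (0,π) with sin(2ζ) ≠ 0, and define F(ν₁,ν₂,ν₃) = ∏_{a≠b, a,b∈{1,2,3}} sinh(ν_a − ν_b) / sinh(ν_a − ν_b − iζ). Fix ν₁, ν₂ ∈ ℂ and set ν₁₂ = ν₁ − ν₂, assuming ν₁₂ ∉ iπℤ, ν₁₂ − iζ ∉ iπℤ, ν₁₂ + iζ ∉ iπℤ, and ν₁₂ + 2iζ ∉ iπℤ. Then lim_{ν₃ → ν₂ − iζ} (ν₃ − ν₂ + iζ)·F(ν₁,ν₂,ν₃) = −i · (sin²(ζ)/sin(2ζ)) · sinh(ν₁₂)·sinh(ν₁₂ + iζ) / (sinh(ν₁₂ − iζ)·sinh(ν₁₂ + 2iζ)). -/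
open Topology

/-!
Since `sinh` is odd, the six factors group into `K(ν₁ - ν₂) K(ν₁ - ν₃) K(ν₂ - ν₃)` with
`K(u) = sinh² u / (sinh (u + η) sinh (u - η))` and `η = iζ`. As `ν₃ → ν₂ - η`, only the last factor
is singular: its argument tends to `η`, a simple pole of `K` with residue `sinh² η / sinh 2η`,
and the reflection `ν₃ ↦ ν₂ - ν₃` reverses the sign. The other two factors tend to
`K(ν₁₂) K(ν₁₂ + η)`, in which half of the zeros cancel half of the poles.
-/

section

open Complex Filter

/-- The interaction factor of a pair of particles with rapidity difference `u`: the two factors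
`(a, b)` and `(b, a)` of the ordered product, merged using that `sinh` is odd. The parameter `η`
stands for `iζ`. -/
noncomputable def pairKernel (η u : ℂ) : ℂ :=
  sinh u ^ 2 / (sinh (u + η) * sinh (u - η))

/-- The three-particle kernel `∏_{a ≠ b} sinh (νₐ - ν_b) / sinh (νₐ - ν_b - iζ)`, for complex
anisotropy `ζ`. -/
noncomputable def threeParticleKernel (ζ ν₁ ν₂ ν₃ : ℂ) : ℂ :=
  (sinh (ν₁ - ν₂) / sinh (ν₁ - ν₂ - I * ζ)) * (sinh (ν₂ - ν₁) / sinh (ν₂ - ν₁ - I * ζ)) *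
  (sinh (ν₁ - ν₃) / sinh (ν₁ - ν₃ - I * ζ)) * (sinh (ν₃ - ν₁) / sinh (ν₃ - ν₁ - I * ζ)) *
  (sinh (ν₂ - ν₃) / sinh (ν₂ - ν₃ - I * ζ)) * (sinh (ν₃ - ν₂) / sinh (ν₃ - ν₂ - I * ζ))

theorem sinh_eq_zero_iff {z : ℂ} : sinh z = 0 ↔ ∃ k : ℤ, z = I * Real.pi * k := by
  have sin_I_mul : sin (I * z) = sinh z * I := by rw [mul_comm, sin_mul_I]
  rw [← mul_eq_zero_iff_right I_ne_zero, ← sin_I_mul, sin_eq_zero_iff]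
  refine (Equiv.neg ℤ).exists_congr fun k => ?_
  rw [Equiv.neg_apply, Int.cast_neg]
  constructor <;> intro h
  · linear_combination -I * h + z * I_sq
  · linear_combination I * h - Real.pi * k * I_sq

theorem sinh_two_mul_I_mul (ζ : ℂ) : sinh (2 * (I * ζ)) = sin (2 * ζ) * I := by
  rw [← sinh_mul_I]
  congr 1
  ring

theorem sinh_sq_div_sinh_two_mul (ζ : ℂ) :
    sinh (I * ζ) ^ 2 / sinh (2 * (I * ζ)) = I * (sin ζ ^ 2 / sin (2 * ζ)) := by
  rw [sinh_two_mul_I_mul, mul_comm I ζ, sinh_mul_I, mul_pow, mul_div_mul_comm, sq I,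
    mul_self_div_self, mul_comm]

theorem tendsto_div_sinh_nhdsNE_zero : Tendsto (fun z : ℂ => z / sinh z) (𝓝[≠] 0) (𝓝 1) := by
  have hderiv : HasDerivAt sinh 1 0 := by simpa using hasDerivAt_sinh 0
  simpa [div_eq_mul_inv, mul_comm] using hderiv.tendsto_slope_zero.inv₀ one_ne_zero

theorem continuousAt_pairKernel {η u : ℂ} (hadd : sinh (u + η) ≠ 0) (hsub : sinh (u - η) ≠ 0) :
    ContinuousAt (pairKernel η) u :=
  ContinuousAt.div (by fun_prop) (by fun_prop) (mul_ne_zero hadd hsub)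

theorem tendsto_sub_mul_pairKernel {η : ℂ} (hη : sinh (2 * η) ≠ 0) :
    Tendsto (fun u => (u - η) * pairKernel η u) (𝓝[≠] η) (𝓝 (sinh η ^ 2 / sinh (2 * η))) := by
  have hshift : Tendsto (· - η) (𝓝[≠] η) (𝓝[≠] 0) :=
    map_subRight_nhdsNE.le.trans_eq (by rw [sub_self])
  have hregular : ContinuousAt (fun u => sinh u ^ 2 / sinh (u + η)) η :=
    ContinuousAt.div (by fun_prop) (by fun_prop) (by rwa [← two_mul])
  have hlim := (hregular.tendsto.mono_left nhdsWithin_le_nhds).mul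
    (tendsto_div_sinh_nhdsNE_zero.comp hshift)
  rw [mul_one, ← two_mul] at hlim
  refine hlim.congr fun u => ?_
  rw [pairKernel, Function.comp_apply]
  ring

theorem pairKernel_mul_pairKernel_add (η u : ℂ) :
    pairKernel η u * pairKernel η (u + η) =
      sinh u * sinh (u + η) / (sinh (u - η) * sinh (u + 2 * η)) := by
  rw [pairKernel, pairKernel, add_sub_cancel_right, add_assoc, ← two_mul]
  field_simp

theorem tendsto_add_mul_pairKernel_mul {η ν₁ ν₂ : ℂ} (hη : sinh (2 * η) ≠ 0)
    (hν : sinh (ν₁ - ν₂) ≠ 0) (hνη : sinh (ν₁ - ν₂ + 2 * η) ≠ 0) :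
    Tendsto
      (fun ν₃ => (ν₃ - ν₂ + η) *
        (pairKernel η (ν₁ - ν₂) * pairKernel η (ν₁ - ν₃) * pairKernel η (ν₂ - ν₃)))
      (𝓝[≠] (ν₂ - η))
      (𝓝 (-(sinh η ^ 2 / sinh (2 * η)) *
        (sinh (ν₁ - ν₂) * sinh (ν₁ - ν₂ + η) /
          (sinh (ν₁ - ν₂ - η) * sinh (ν₁ - ν₂ + 2 * η))))) := by
  have hreflect : Tendsto (ν₂ - ·) (𝓝[≠] (ν₂ - η)) (𝓝[≠] η) :=
    map_subLeft_nhdsNE.le.trans_eq (by rw [sub_sub_cancel])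
  have hpole := (tendsto_sub_mul_pairKernel hη).comp hreflect
  have hregular : ContinuousAt (fun ν₃ => pairKernel η (ν₁ - ν₃)) (ν₂ - η) := by
    refine (continuousAt_pairKernel ?_ ?_).comp (by fun_prop)
    · rwa [← sub_add, add_assoc, ← two_mul]
    · rwa [← sub_add, add_sub_cancel_right]
  have hlim := hpole.neg.mul
    ((hregular.tendsto.mono_left nhdsWithin_le_nhds).const_mul (pairKernel η (ν₁ - ν₂)))
  rw [← sub_add, pairKernel_mul_pairKernel_add] at hlim
  refine hlim.congr fun ν₃ => ?_
  rw [Function.comp_apply]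
  ring

theorem threeParticleKernel_eq_pairKernel_mul (ζ ν₁ ν₂ ν₃ : ℂ) :
    threeParticleKernel ζ ν₁ ν₂ ν₃ = pairKernel (I * ζ) (ν₁ - ν₂) * pairKernel (I * ζ) (ν₁ - ν₃) *
      pairKernel (I * ζ) (ν₂ - ν₃) := by
  have ordered_pair (a b : ℂ) : sinh (a - b) / sinh (a - b - I * ζ) *
      (sinh (b - a) / sinh (b - a - I * ζ)) = pairKernel (I * ζ) (a - b) := by
    rw [← neg_sub a b, ← neg_add', sinh_neg, sinh_neg, neg_div_neg_eq, div_mul_div_comm, ← sq,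
      mul_comm (sinh (a - b - I * ζ)), pairKernel]
  simp only [← ordered_pair, threeParticleKernel, mul_assoc]

theorem three_particle_residue_reduction_general {ζ ν₁ ν₂ : ℂ} (hs : sin (2 * ζ) ≠ 0)
    (h1 : ∀ k : ℤ, ν₁ - ν₂ ≠ I * Real.pi * k)
    (_h2 : ∀ k : ℤ, ν₁ - ν₂ - I * ζ ≠ I * Real.pi * k)
    (_h3 : ∀ k : ℤ, ν₁ - ν₂ + I * ζ ≠ I * Real.pi * k)
    (h4 : ∀ k : ℤ, ν₁ - ν₂ + 2 * I * ζ ≠ I * Real.pi * k) :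
    Tendsto (fun ν₃ => (ν₃ - ν₂ + I * ζ) * threeParticleKernel ζ ν₁ ν₂ ν₃)
      (𝓝[≠] (ν₂ - I * ζ))
      (𝓝 (-I * (sin ζ ^ 2 / sin (2 * ζ)) * (sinh (ν₁ - ν₂) * sinh (ν₁ - ν₂ + I * ζ)) /
        (sinh (ν₁ - ν₂ - I * ζ) * sinh (ν₁ - ν₂ + 2 * I * ζ)))) := by
  have hsinh : sinh (2 * (I * ζ)) ≠ 0 := by
    rw [sinh_two_mul_I_mul]
    exact mul_ne_zero hs I_ne_zero
  have hν : sinh (ν₁ - ν₂) ≠ 0 := by simpa [sinh_eq_zero_iff] using h1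
  have hνη : sinh (ν₁ - ν₂ + 2 * (I * ζ)) ≠ 0 := by
    simpa [sinh_eq_zero_iff, mul_assoc 2 I ζ] using h4
  convert tendsto_add_mul_pairKernel_mul hsinh hν hνη using 2
  · rw [threeParticleKernel_eq_pairKernel_mul]
  · rw [sinh_sq_div_sinh_two_mul, mul_assoc 2, neg_mul, mul_div_assoc]

end

/-- Residue reduction of the three-particle kernel
`F(ν₁,ν₂,ν₃) = ∏_{a≠b} sinh(νₐ-ν_b)/sinh(νₐ-ν_b-iζ)` at `ν₃ = ν₂ - iζ`:
`lim_{ν₃→ν₂-iζ} (ν₃-ν₂+iζ)·F = -i·(sin²ζ/sin 2ζ)·sinh(ν₁₂)sinh(ν₁₂+iζ)/(sinh(ν₁₂-iζ)sinh(ν₁₂+2iζ))`. -/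
theorem three_particle_residue_reduction (ζ : ℝ) (hζ : ζ ∈ Set.Ioo 0 Real.pi)
    (hs : Real.sin (2 * ζ) ≠ 0) (F : ℂ → ℂ → ℂ → ℂ)
    (hF : ∀ ν₁ ν₂ ν₃ : ℂ, F ν₁ ν₂ ν₃ =
      (Complex.sinh (ν₁ - ν₂) / Complex.sinh (ν₁ - ν₂ - Complex.I * (ζ : ℂ))) *
      (Complex.sinh (ν₂ - ν₁) / Complex.sinh (ν₂ - ν₁ - Complex.I * (ζ : ℂ))) *
      (Complex.sinh (ν₁ - ν₃) / Complex.sinh (ν₁ - ν₃ - Complex.I * (ζ : ℂ))) *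
      (Complex.sinh (ν₃ - ν₁) / Complex.sinh (ν₃ - ν₁ - Complex.I * (ζ : ℂ))) *
      (Complex.sinh (ν₂ - ν₃) / Complex.sinh (ν₂ - ν₃ - Complex.I * (ζ : ℂ))) *
      (Complex.sinh (ν₃ - ν₂) / Complex.sinh (ν₃ - ν₂ - Complex.I * (ζ : ℂ))))
    (ν₁ ν₂ : ℂ)
    (h1 : ∀ k : ℤ, ν₁ - ν₂ ≠ Complex.I * (Real.pi : ℂ) * (k : ℂ))
    (h2 : ∀ k : ℤ, ν₁ - ν₂ - Complex.I * (ζ : ℂ) ≠ Complex.I * (Real.pi : ℂ) * (k : ℂ))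
    (h3 : ∀ k : ℤ, ν₁ - ν₂ + Complex.I * (ζ : ℂ) ≠ Complex.I * (Real.pi : ℂ) * (k : ℂ))
    (h4 : ∀ k : ℤ, ν₁ - ν₂ + 2 * Complex.I * (ζ : ℂ) ≠ Complex.I * (Real.pi : ℂ) * (k : ℂ)) :
    Filter.Tendsto (fun ν₃ : ℂ => (ν₃ - ν₂ + Complex.I * (ζ : ℂ)) * F ν₁ ν₂ ν₃)
      (𝓝[≠] (ν₂ - Complex.I * (ζ : ℂ)))
      (𝓝 (-Complex.I * ((Real.sin ζ ^ 2 / Real.sin (2 * ζ) : ℝ) : ℂ) *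
        (Complex.sinh (ν₁ - ν₂) * Complex.sinh (ν₁ - ν₂ + Complex.I * (ζ : ℂ))) /
        (Complex.sinh (ν₁ - ν₂ - Complex.I * (ζ : ℂ)) *
          Complex.sinh (ν₁ - ν₂ + 2 * Complex.I * (ζ : ℂ))))) := by
  simpa [threeParticleKernel, hF] using
    three_particle_residue_reduction_general (mod_cast hs) h1 h2 h3 h4
end

section
/- Let ζ ∈ (0,π) and σ ∈ {0,1}. The Suzuki–Takahashi conditions for a 4-string, namely (−1)^σ · sin(kζ) · sin((4−k)ζ) > 0 for all k = 1, 2, 3, hold if and only if σ = 0 and ζ ∈ (0, π/3) ∪ (2π/3, π). In particular, they never hold with σ = 1. -/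
/-!
The middle condition `k = 2` reads `(-1) ^ σ * sin (2ζ) ^ 2 > 0`, which forces `σ` to be even. The
outer ones then say `sin ζ * sin (3ζ) = sin ζ ^ 2 * (4 * cos ζ ^ 2 - 1) > 0`, that is `sin ζ ≠ 0`
and `|cos ζ| > 1 / 2`; these already imply `sin (2ζ) ≠ 0`. Monotonicity of the cosine on `[0, π]`
turns the bound on `|cos ζ|` into the two intervals.
-/

open Real

/-- The Suzuki–Takahashi conditions for an `r`-string with anisotropy `cos ζ` whose centre has
parity `σ`. Only the parity of `σ` matters, so `σ` ranges over all of `ℕ`. -/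
def SuzukiTakahashi (r σ : ℕ) (ζ : ℝ) : Prop :=
  ∀ k : ℕ, 1 ≤ k → k < r → 0 < (-1 : ℝ) ^ σ * sin (k * ζ) * sin ((r - k) * ζ)

theorem cos_lt_abs_cos_iff {a x : ℝ} (ha : a ∈ Set.Icc 0 π) (hx : x ∈ Set.Icc 0 π) :
    cos a < |cos x| ↔ x < a ∨ π - a < x := by
  have ha' : π - a ∈ Set.Icc 0 π := ⟨sub_nonneg.2 ha.2, sub_le_self π ha.1⟩
  rw [lt_abs, lt_neg, ← cos_pi_sub a, strictAntiOn_cos.lt_iff_gt ha hx,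
    strictAntiOn_cos.lt_iff_gt hx ha']

theorem half_lt_abs_cos_iff {x : ℝ} (hx : x ∈ Set.Icc 0 π) :
    1 / 2 < |cos x| ↔ x < π / 3 ∨ 2 * π / 3 < x := by
  have hπ : π / 3 ∈ Set.Icc 0 π := ⟨by positivity, by linarith [pi_pos]⟩
  rw [← cos_pi_div_three, cos_lt_abs_cos_iff hπ hx, show π - π / 3 = 2 * π / 3 by ring]

theorem sin_ne_zero_and_half_lt_abs_cos_iff {x : ℝ} (hx : x ∈ Set.Ioo 0 π) :
    sin x ≠ 0 ∧ 1 / 2 < |cos x| ↔ x ∈ Set.Ioo 0 (π / 3) ∪ Set.Ioo (2 * π / 3) π := by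
  have hsin : sin x ≠ 0 := (sin_pos_of_mem_Ioo hx).ne'
  rw [half_lt_abs_cos_iff (Set.Ioo_subset_Icc_self hx)]
  simp [hsin, hx.1, hx.2]

theorem sin_mul_sin_three_mul (x : ℝ) :
    sin x * sin (3 * x) = sin x ^ 2 * (4 * cos x ^ 2 - 1) := by
  rw [sin_three_mul, cos_sq']
  ring

theorem sin_mul_sin_three_mul_pos_iff {x : ℝ} :
    0 < sin x * sin (3 * x) ↔ sin x ≠ 0 ∧ 1 / 2 < |cos x| := by
  have hcos : 0 < 4 * cos x ^ 2 - 1 ↔ 1 / 2 < |cos x| := by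
    rw [← abs_of_pos (one_half_pos (α := ℝ)), ← sq_lt_sq]
    constructor <;> intro h <;> linarith
  rw [sin_mul_sin_three_mul, ← hcos]
  constructor
  · intro h
    have hsin : sin x ≠ 0 := fun h0 ↦ by simp [h0] at h
    exact ⟨hsin, pos_of_mul_pos_right h (sq_nonneg _)⟩
  · rintro ⟨hsin, h⟩
    exact mul_pos (sq_pos_of_ne_zero hsin) h

theorem sin_two_mul_ne_zero_iff {x : ℝ} : sin (2 * x) ≠ 0 ↔ sin x ≠ 0 ∧ cos x ≠ 0 := by
  simp [sin_two_mul]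

namespace SuzukiTakahashi

variable {σ : ℕ} {ζ : ℝ}

theorem even_of_two_mul {m : ℕ} (hm : 0 < m) (h : SuzukiTakahashi (2 * m) σ ζ) : Even σ := by
  by_contra hσ
  have hmid := h m hm (by lia)
  have hsub : ((2 * m : ℕ) : ℝ) - m = m := by push_cast; ring
  rw [hsub, (Nat.not_even_iff_odd.1 hσ).neg_one_pow, mul_assoc, neg_one_mul, neg_pos] at hmid
  exact hmid.not_ge (mul_self_nonneg _)

theorem four_iff_of_even (hσ : Even σ) :
    SuzukiTakahashi 4 σ ζ ↔ 0 < sin ζ * sin (3 * ζ) ∧ sin (2 * ζ) ≠ 0 := by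
  have h41 : (4 : ℝ) - 1 = 3 := by norm_num
  have h42 : (4 : ℝ) - 2 = 2 := by norm_num
  have h43 : (4 : ℝ) - 3 = 1 := by norm_num
  constructor
  · intro h
    have h₁ : 0 < sin ζ * sin (3 * ζ) := by
      simpa [hσ.neg_one_pow, h41] using h 1 le_rfl (by norm_num)
    have h₂ : 0 < sin (2 * ζ) * sin (2 * ζ) := by
      simpa only [hσ.neg_one_pow, Nat.cast_ofNat, one_mul, h42] using h 2 one_le_two (by norm_num)
    exact ⟨h₁, mul_self_pos.1 h₂⟩
  · rintro ⟨h₁, h₂⟩ k hk hk4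
    interval_cases k
    · simpa [hσ.neg_one_pow, h41] using h₁
    · simpa [hσ.neg_one_pow, h42] using h₂
    · simpa [hσ.neg_one_pow, h43, mul_comm] using h₁

theorem four_iff : SuzukiTakahashi 4 σ ζ ↔ Even σ ∧ sin ζ ≠ 0 ∧ 1 / 2 < |cos ζ| := by
  constructor
  · intro h
    have hσ : Even σ := h.even_of_two_mul (m := 2) two_pos
    exact ⟨hσ, sin_mul_sin_three_mul_pos_iff.1 ((four_iff_of_even hσ).1 h).1⟩
  · rintro ⟨hσ, hsin, hcos⟩
    have hcos0 : cos ζ ≠ 0 := abs_pos.1 (one_half_pos.trans hcos)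
    exact (four_iff_of_even hσ).2
      ⟨sin_mul_sin_three_mul_pos_iff.2 ⟨hsin, hcos⟩, sin_two_mul_ne_zero_iff.2 ⟨hsin, hcos0⟩⟩

end SuzukiTakahashi

theorem suzuki_takahashi_four_string_general (ζ : ℝ) (σ : ℕ) :
    (∀ k : ℕ, 1 ≤ k → k ≤ 3 → 0 < (-1 : ℝ) ^ σ * sin (k * ζ) * sin ((4 - k) * ζ)) ↔
      Even σ ∧ sin ζ ≠ 0 ∧ 1 / 2 < |cos ζ| := by
  simp only [← SuzukiTakahashi.four_iff, SuzukiTakahashi, Nat.lt_succ_iff, Nat.cast_ofNat]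

/-- Suzuki–Takahashi conditions for a 4-string: `(-1)^σ·sin(kζ)·sin((4-k)ζ) > 0`
for `k = 1, 2, 3` holds iff `σ = 0` and `ζ ∈ (0, π/3) ∪ (2π/3, π)`. -/
theorem suzuki_takahashi_four_string (ζ : ℝ) (hζ : ζ ∈ Set.Ioo 0 Real.pi)
    (σ : ℕ) (hσ : σ = 0 ∨ σ = 1) :
    (∀ k : ℕ, 1 ≤ k → k ≤ 3 →
        0 < (-1 : ℝ) ^ σ * Real.sin ((k : ℝ) * ζ) * Real.sin ((4 - (k : ℝ)) * ζ)) ↔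
      σ = 0 ∧ ζ ∈ Set.Ioo 0 (Real.pi / 3) ∪ Set.Ioo (2 * Real.pi / 3) Real.pi := by
  rw [suzuki_takahashi_four_string_general, sin_ne_zero_and_half_lt_abs_cos_iff hζ]
  rcases hσ with rfl | rfl <;> simp
end

section
/- Let ζ ∈ (0,π) and σ ∈ {0,1}. The Suzuki–Takahashi conditions for a 6-string, namely (−1)^σ · sin(kζ) · sin((6−k)ζ) > 0 for all k = 1, …, 5, hold if and only if σ = 0 and ζ ∈ (0, π/5) ∪ (4π/5, π). In particular, they never hold with σ = 1. -/
/-!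
For an even string length `r` the two sine factors at `k = r / 2` coincide, so the sign `(-1) ^ σ`
must be positive, and the reflection `ζ ↦ π - ζ` preserves the conditions. For `r = 6` one may thus
assume `ζ ≤ π / 2`, and the phases are then bounded in turn: `k = 2` forces `4ζ < π`, since
`2ζ ≤ π` and `4ζ ≤ 2π`; then `5ζ < 2π`, and `k = 1` forces `5ζ < π`. Conversely, all the sines are
positive as soon as `(r - 1)ζ < π`.
-/

open Real

theorem lt_pi_of_sin_pos {x : ℝ} (hsin : 0 < sin x) (hx : x ≤ 2 * π) : x < π := by
  by_contra! hπ
  have hshift : 0 ≤ sin (x - π) :=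
    sin_nonneg_of_nonneg_of_le_pi (by linarith) (by linarith)
  rw [sin_sub_pi] at hshift
  linarith

theorem lt_pi_of_sin_mul_sin_pos {x y : ℝ} (h : 0 < sin x * sin y) (hx₀ : 0 ≤ x) (hxπ : x ≤ π)
    (hy : y ≤ 2 * π) : y < π :=
  lt_pi_of_sin_pos (pos_of_mul_pos_right h (sin_nonneg_of_nonneg_of_le_pi hx₀ hxπ)) hy

theorem sin_natCast_mul_pi_sub (n : ℕ) (x : ℝ) :
    sin (n * (π - x)) = -((-1) ^ n * sin (n * x)) := by
  rw [mul_sub, sin_nat_mul_pi_sub]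

namespace SuzukiTakahashi

variable {r σ : ℕ} {ζ : ℝ}

theorem sin_mul_sin_pos (h : SuzukiTakahashi r σ ζ) (hσ : Even σ) {k : ℕ} (hk : 1 ≤ k)
    (hkr : k < r) : 0 < sin (k * ζ) * sin ((r - k) * ζ) := by
  simpa only [hσ.neg_one_pow, one_mul] using h k hk hkr

theorem even_parity (h : SuzukiTakahashi r σ ζ) (hr : Even r) (hr₀ : 0 < r) : Even σ := by
  obtain ⟨m, rfl⟩ := hr
  have hmid := h m (by lia) (by lia)
  rw [Nat.cast_add, add_sub_cancel_right, mul_assoc] at hmid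
  by_contra hσ
  rw [(Nat.not_even_iff_odd.1 hσ).neg_one_pow] at hmid
  linarith [mul_self_nonneg (sin (m * ζ))]

theorem pi_sub_iff : SuzukiTakahashi r σ (π - ζ) ↔ SuzukiTakahashi r (σ + r) ζ := by
  refine forall_congr' fun k ↦ imp_congr_right fun _ ↦ imp_congr_right fun hkr ↦ ?_
  obtain ⟨j, rfl⟩ := Nat.exists_eq_add_of_le hkr.le
  rw [Nat.cast_add, add_sub_cancel_left, sin_natCast_mul_pi_sub, sin_natCast_mul_pi_sub,
    pow_add, pow_add]
  ring_nf

theorem add_even_iff {n : ℕ} (hn : Even n) :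
    SuzukiTakahashi r (σ + n) ζ ↔ SuzukiTakahashi r σ ζ := by
  simp only [SuzukiTakahashi, pow_add, hn.neg_one_pow, mul_one]

theorem pi_sub_iff_of_even (hr : Even r) :
    SuzukiTakahashi r σ (π - ζ) ↔ SuzukiTakahashi r σ ζ :=
  pi_sub_iff.trans (add_even_iff hr)

theorem of_mul_lt_pi (hσ : Even σ) (hζ : 0 < ζ) (hlt : (r - 1) * ζ < π) :
    SuzukiTakahashi r σ ζ := by
  intro k hk hkr
  have hk₁ : (1 : ℝ) ≤ k := by exact_mod_cast hk
  have hk₂ : (k : ℝ) + 1 ≤ r := by exact_mod_cast hkr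
  have hpos {a : ℝ} (ha₁ : 1 ≤ a) (har : a ≤ r - 1) : 0 < sin (a * ζ) :=
    sin_pos_of_pos_of_lt_pi (by positivity)
      ((mul_le_mul_of_nonneg_right har hζ.le).trans_lt hlt)
  rw [hσ.neg_one_pow, one_mul]
  exact mul_pos (hpos hk₁ (by linarith)) (hpos (by linarith) (by linarith))

theorem lt_pi_div_five (h : SuzukiTakahashi 6 σ ζ) (hζ₀ : 0 ≤ ζ) (hζ : ζ ≤ π / 2) :
    ζ < π / 5 := by
  have hσ : Even σ := h.even_parity (by decide) (by norm_num)
  have h₁ : 0 < sin ζ * sin (5 * ζ) := by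
    convert h.sin_mul_sin_pos hσ (k := 1) (by norm_num) (by norm_num) using 3 <;> norm_num
  have h₂ : 0 < sin (2 * ζ) * sin (4 * ζ) := by
    convert h.sin_mul_sin_pos hσ (k := 2) (by norm_num) (by norm_num) using 3 <;> norm_num
  have hfour : 4 * ζ < π :=
    lt_pi_of_sin_mul_sin_pos h₂ (by linarith) (by linarith) (by linarith)
  have hfive : 5 * ζ < π :=
    lt_pi_of_sin_mul_sin_pos h₁ hζ₀ (by linarith) (by linarith)
  linarith

end SuzukiTakahashi

theorem suzuki_takahashi_six_string_general {ζ : ℝ} (hζ : ζ ∈ Set.Ioo 0 π) (σ : ℕ) :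
    SuzukiTakahashi 6 σ ζ ↔
      Even σ ∧ ζ ∈ Set.Ioo 0 (π / 5) ∪ Set.Ioo (4 * π / 5) π := by
  obtain ⟨hζ₀, hζπ⟩ := hζ
  have reflect : SuzukiTakahashi 6 σ (π - ζ) ↔ SuzukiTakahashi 6 σ ζ :=
    SuzukiTakahashi.pi_sub_iff_of_even (by decide)
  constructor
  · intro h
    refine ⟨h.even_parity (by decide) (by norm_num), ?_⟩
    rcases le_total ζ (π / 2) with hle | hge
    · exact Or.inl ⟨hζ₀, h.lt_pi_div_five hζ₀.le hle⟩
    · have hlt : π - ζ < π / 5 := (reflect.2 h).lt_pi_div_five (by linarith) (by linarith)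
      exact Or.inr ⟨by linarith, hζπ⟩
  · rintro ⟨hσ, ⟨-, hlt⟩ | ⟨hgt, -⟩⟩
    · exact .of_mul_lt_pi hσ hζ₀ (by norm_num; linarith)
    · exact reflect.1 (.of_mul_lt_pi hσ (by linarith) (by norm_num; linarith))

/-- Suzuki–Takahashi conditions for a 6-string: `(-1)^σ·sin(kζ)·sin((6-k)ζ) > 0`
for `k = 1,…,5` holds iff `σ = 0` and `ζ ∈ (0, π/5) ∪ (4π/5, π)`. -/
theorem suzuki_takahashi_six_string (ζ : ℝ) (hζ : ζ ∈ Set.Ioo 0 Real.pi)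
    (σ : ℕ) (hσ : σ = 0 ∨ σ = 1) :
    (∀ k : ℕ, 1 ≤ k → k ≤ 5 →
        0 < (-1 : ℝ) ^ σ * Real.sin ((k : ℝ) * ζ) * Real.sin ((6 - (k : ℝ)) * ζ)) ↔
      σ = 0 ∧ ζ ∈ Set.Ioo 0 (Real.pi / 5) ∪ Set.Ioo (4 * Real.pi / 5) Real.pi := by
  have hparity : Even σ ↔ σ = 0 := by rcases hσ with rfl | rfl <;> decide
  rw [← hparity, ← suzuki_takahashi_six_string_general hζ]
  simp only [SuzukiTakahashi, Nat.lt_succ_iff, Nat.cast_ofNat]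
end

section
/- Let ζ ∈ (0,π) with sin(2ζ) ≠ 0, set ζ_p = min(ζ, π−ζ) and s₂ = sgn(sin 2ζ), and define Φ(x) = sinh(x)/sinh(x − iζ). Then for every τ ∈ {−1, +1}, every sign σ ∈ {−1, +1}, and every ν ∈ ℂ for which none of the hyperbolic sines appearing in a denominator below vanishes, one has: iτ · ( sinh²(−σ i τ ζ_p) / sinh(−2 σ i τ ζ_p) ) · Φ(ν)·Φ(−ν) · Φ(ν + σ i τ ζ_p)·Φ(−ν − σ i τ ζ_p) = σ · s₂ · (sin²(ζ)/sin(2ζ)) · sinh(ν)·sinh(ν + σ i s₂ τ ζ) / ( sinh(ν − σ i s₂ τ ζ) · sinh(ν + 2 σ i s₂ τ ζ) ). -/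
/-!
As a function of the displacement `a = σiτζ_p`, the residue weight is `πi`-periodic. Since
`ζ_p ≡ s₂ζ` modulo `π`, one may replace `a` by `b = σis₂τζ = ±iζ`. The product `Φ(x)Φ(-x)` is then
`sinh² x / (sinh (x - b) sinh (x + b))`, and its values at `x = ν` and `x = ν + b` share the factors
`sinh ν` and `sinh (ν + b)`, which cancel.
-/

open Complex

/-- The two-particle scattering factor `Φ₁₁` of the XXZ chain, for a complex anisotropy `ζ`. -/
noncomputable def scatteringFactor (ζ x : ℂ) : ℂ :=
  sinh x / sinh (x - I * ζ)

/-- The weight collected from the residue at displacement `a` from `ν`; in the reduction of the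
three-particle sector `a` is `σ i τ ζ_p`. -/
noncomputable def residueWeight (ζ τ ν a : ℂ) : ℂ :=
  I * τ * (sinh (-a) ^ 2 / sinh (-(2 * a))) *
    (scatteringFactor ζ ν * scatteringFactor ζ (-ν)) *
    (scatteringFactor ζ (ν + a) * scatteringFactor ζ (-ν - a))

theorem scatteringFactor_periodic (ζ : ℂ) :
    Function.Periodic (scatteringFactor ζ) (Real.pi * I) :=
  sinh_antiperiodic.div (sinh_antiperiodic.sub_const (I * ζ))

theorem residueWeight_periodic (ζ τ ν : ℂ) :
    Function.Periodic (residueWeight ζ τ ν) (Real.pi * I) := fun a => by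
  have sinh_neg_shift : sinh (-(a + Real.pi * I)) = -sinh (-a) := by
    rw [neg_add', sinh_antiperiodic.sub_eq]
  have sinh_neg_two_mul_shift : sinh (-(2 * (a + Real.pi * I))) = sinh (-(2 * a)) := by
    rw [mul_add, neg_add', sinh_antiperiodic.periodic_two_mul.sub_eq]
  simp only [residueWeight, sinh_neg_shift, sinh_neg_two_mul_shift, neg_sq, ← add_assoc,
    ← sub_sub, scatteringFactor_periodic ζ _, (scatteringFactor_periodic ζ).sub_eq]

theorem scatteringFactor_mul_neg {ζ b : ℂ} (hb : b = I * ζ ∨ b = -(I * ζ)) (x : ℂ) :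
    scatteringFactor ζ x * scatteringFactor ζ (-x) =
      sinh x ^ 2 / (sinh (x - b) * sinh (x + b)) := by
  have sinh_neg_sub : sinh (-x - I * ζ) = -sinh (x + I * ζ) := by rw [← sinh_neg, neg_add']
  have product : scatteringFactor ζ x * scatteringFactor ζ (-x) =
      sinh x ^ 2 / (sinh (x - I * ζ) * sinh (x + I * ζ)) := by
    rw [scatteringFactor, scatteringFactor, sinh_neg_sub, sinh_neg, neg_div_neg_eq,
      div_mul_div_comm, sq]
  rcases hb with rfl | rfl
  · exact product
  · rw [product, sub_neg_eq_add, ← sub_eq_add_neg, mul_comm (sinh (x - _))]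

theorem scatteringFactor_string_product {ζ b : ℂ} (hb : b = I * ζ ∨ b = -(I * ζ)) (ν : ℂ) :
    scatteringFactor ζ ν * scatteringFactor ζ (-ν) *
        (scatteringFactor ζ (ν + b) * scatteringFactor ζ (-ν - b)) =
      sinh ν * sinh (ν + b) / (sinh (ν - b) * sinh (ν + 2 * b)) := by
  rw [← neg_add', scatteringFactor_mul_neg hb, scatteringFactor_mul_neg hb,
    add_sub_cancel_right, add_assoc, ← two_mul]
  -- The cancellation `s ^ 2 / s = s` is valid at `s = 0` as well, since `0 / 0 = 0`.
  field_simp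

theorem I_mul_sinh_sq_div_sinh_two_mul {ε : ℂ} (hε : ε = 1 ∨ ε = -1) (ζ : ℂ) :
    I * (sinh (-(ε * (I * ζ))) ^ 2 / sinh (-(2 * (ε * (I * ζ))))) =
      ε * (sin ζ ^ 2 / sin (2 * ζ)) := by
  have sinh_I_mul (z : ℂ) : sinh (I * z) = I * sin z := by
    rw [mul_comm, sinh_mul_I, mul_comm]
  have two_mul_I : 2 * (I * ζ) = I * (2 * ζ) := by ring
  rcases hε with rfl | rfl <;>
    simp only [one_mul, neg_mul, mul_neg, neg_neg, two_mul_I, sinh_neg, sinh_I_mul, neg_sq,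
      mul_pow, I_sq] <;>
    field_simp

theorem residueWeight_sign_mul {ε : ℂ} (hε : ε = 1 ∨ ε = -1) (ζ τ ν : ℂ) :
    residueWeight ζ τ ν (ε * (I * ζ)) =
      τ * ε * (sin ζ ^ 2 / sin (2 * ζ)) * (sinh ν * sinh (ν + ε * (I * ζ))) /
        (sinh (ν - ε * (I * ζ)) * sinh (ν + 2 * (ε * (I * ζ)))) := by
  have hb : ε * (I * ζ) = I * ζ ∨ ε * (I * ζ) = -(I * ζ) := by
    rcases hε with rfl | rfl <;> simp
  rw [residueWeight, mul_assoc (I * τ * _), scatteringFactor_string_product hb,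
    mul_right_comm I τ, I_mul_sinh_sq_div_sinh_two_mul hε]
  ring

theorem exists_int_min_pi_sub_eq_sign_mul_add {ζ : ℝ} (hζ : ζ ∈ Set.Ioo 0 Real.pi)
    (hsin : Real.sin (2 * ζ) ≠ 0) :
    ∃ n : ℤ, min ζ (Real.pi - ζ) = Real.sign (Real.sin (2 * ζ)) * ζ + n * Real.pi := by
  obtain ⟨hpos, hlt⟩ := hζ
  rcases lt_or_ge ζ (Real.pi / 2) with h | h
  · have sin_pos : 0 < Real.sin (2 * ζ) :=
      Real.sin_pos_of_pos_of_lt_pi (by linarith) (by linarith)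
    refine ⟨0, ?_⟩
    rw [Real.sign_of_pos sin_pos, min_eq_left (by linarith)]
    simp
  · have sin_nonpos : Real.sin (2 * ζ) ≤ 0 := by
      rw [← Real.sin_sub_two_pi]
      exact Real.sin_nonpos_of_nonpos_of_neg_pi_le (by linarith) (by linarith)
    refine ⟨1, ?_⟩
    rw [Real.sign_of_neg (sin_nonpos.lt_of_ne hsin), min_eq_right (by linarith)]
    push_cast
    ring

theorem exists_int_sign_mul_min_pi_sub_eq {ζ σ τ : ℝ} (hζ : ζ ∈ Set.Ioo 0 Real.pi)
    (hsin : Real.sin (2 * ζ) ≠ 0) (hτ : τ = 1 ∨ τ = -1) (hσ : σ = 1 ∨ σ = -1) :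
    ∃ m : ℤ, σ * τ * min ζ (Real.pi - ζ) =
      σ * Real.sign (Real.sin (2 * ζ)) * τ * ζ + m * Real.pi := by
  obtain ⟨n, hn⟩ := exists_int_min_pi_sub_eq_sign_mul_add hζ hsin
  obtain ⟨k, hk⟩ : ∃ k : ℤ, σ * τ = k := by
    rcases hσ with rfl | rfl <;> rcases hτ with rfl | rfl
    exacts [⟨1, by simp⟩, ⟨-1, by simp⟩, ⟨-1, by simp⟩, ⟨1, by simp⟩]
  refine ⟨k * n, ?_⟩
  rw [hn, Int.cast_mul, ← hk]
  ring

/-- Evaluation of the residue weight `w_α` in the reduction of the three-particle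
sector integral: with `ζ_p = min(ζ, π-ζ)`, `s₂ = sgn(sin 2ζ)` and
`Φ(x) = sinh x / sinh(x - iζ)`, for `τ, σ = ±1` one has
`iτ·(sinh²(-σiτζ_p)/sinh(-2σiτζ_p))·Φ(ν)Φ(-ν)·Φ(ν+σiτζ_p)Φ(-ν-σiτζ_p)
 = σ·s₂·(sin²ζ/sin 2ζ)·sinh(ν)sinh(ν+σis₂τζ)/(sinh(ν-σis₂τζ)·sinh(ν+2σis₂τζ))`. -/
theorem residue_weight_identity (ζ : ℝ) (hζ : ζ ∈ Set.Ioo 0 Real.pi)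
    (hs2 : Real.sin (2 * ζ) ≠ 0)
    (ζp : ℝ) (hζp : ζp = min ζ (Real.pi - ζ))
    (s₂ : ℝ) (hs₂ : s₂ = Real.sign (Real.sin (2 * ζ)))
    (Φ : ℂ → ℂ)
    (hΦ : ∀ x : ℂ, Φ x = Complex.sinh x / Complex.sinh (x - Complex.I * (ζ : ℂ)))
    (τ σ : ℝ) (hτ : τ = 1 ∨ τ = -1) (hσ : σ = 1 ∨ σ = -1) (ν : ℂ)
    (hd1 : Complex.sinh (ν - Complex.I * (ζ : ℂ)) ≠ 0)
    (hd2 : Complex.sinh (-ν - Complex.I * (ζ : ℂ)) ≠ 0)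
    (hd3 : Complex.sinh (ν + (σ : ℂ) * Complex.I * (τ : ℂ) * (ζp : ℂ) -
      Complex.I * (ζ : ℂ)) ≠ 0)
    (hd4 : Complex.sinh (-ν - (σ : ℂ) * Complex.I * (τ : ℂ) * (ζp : ℂ) -
      Complex.I * (ζ : ℂ)) ≠ 0)
    (hd5 : Complex.sinh (-(2 * (σ : ℂ) * Complex.I * (τ : ℂ) * (ζp : ℂ))) ≠ 0)
    (hd6 : Complex.sinh (ν - (σ : ℂ) * Complex.I * (s₂ : ℂ) * (τ : ℂ) * (ζ : ℂ)) ≠ 0)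
    (hd7 : Complex.sinh (ν + 2 * (σ : ℂ) * Complex.I * (s₂ : ℂ) * (τ : ℂ) * (ζ : ℂ)) ≠ 0) :
    Complex.I * (τ : ℂ) *
        (Complex.sinh (-((σ : ℂ) * Complex.I * (τ : ℂ) * (ζp : ℂ))) ^ 2 /
          Complex.sinh (-(2 * (σ : ℂ) * Complex.I * (τ : ℂ) * (ζp : ℂ)))) *
        (Φ ν * Φ (-ν)) *
        (Φ (ν + (σ : ℂ) * Complex.I * (τ : ℂ) * (ζp : ℂ)) *
          Φ (-ν - (σ : ℂ) * Complex.I * (τ : ℂ) * (ζp : ℂ))) =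
      (σ : ℂ) * (s₂ : ℂ) * ((Real.sin ζ ^ 2 / Real.sin (2 * ζ) : ℝ) : ℂ) *
        (Complex.sinh ν *
          Complex.sinh (ν + (σ : ℂ) * Complex.I * (s₂ : ℂ) * (τ : ℂ) * (ζ : ℂ))) /
        (Complex.sinh (ν - (σ : ℂ) * Complex.I * (s₂ : ℂ) * (τ : ℂ) * (ζ : ℂ)) *
          Complex.sinh (ν + 2 * (σ : ℂ) * Complex.I * (s₂ : ℂ) * (τ : ℂ) * (ζ : ℂ))) := by
  have hs₂_sign : s₂ = -1 ∨ s₂ = 1 := hs₂ ▸ Real.sign_apply_eq_of_ne_zero _ hs2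
  have hε : (σ * s₂ * τ : ℂ) = 1 ∨ (σ * s₂ * τ : ℂ) = -1 := by
    rcases hσ with rfl | rfl <;> rcases hs₂_sign with h | h <;> rcases hτ with rfl | rfl <;>
      simp [h]
  obtain ⟨m, hm⟩ := exists_int_sign_mul_min_pi_sub_eq hζ hs2 hτ hσ
  have displacement : (σ * I * τ * ζp : ℂ) = σ * s₂ * τ * (I * ζ) + m * (Real.pi * I) := by
    have phase : (σ * τ * ζp : ℂ) = σ * s₂ * τ * ζ + m * Real.pi := by
      rw [hζp, hs₂]
      exact_mod_cast hm
    linear_combination I * phase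
  obtain rfl : Φ = scatteringFactor ζ := funext hΦ
  calc
    _ = residueWeight ζ τ ν (σ * I * τ * ζp) := by simp only [residueWeight, mul_assoc]
    _ = residueWeight ζ τ ν (σ * s₂ * τ * (I * ζ)) := by
      rw [displacement, (residueWeight_periodic ζ τ ν).int_mul m]
    _ = _ := by
      have prefactor : (τ * (σ * s₂ * τ) : ℂ) = σ * s₂ := by
        rcases hτ with rfl | rfl <;> simp
      rw [residueWeight_sign_mul hε, prefactor]
      push_cast
      ring_nf
end
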